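/- arXiv:2101.06726 — 7 statements merged into one kernel-verified Lean document; each statement's English description precedes it below -/
import Mathlib

section
/- For an arbitrary prime power q and any divisor t of q−1, the graph G(q,t) is K_{2,t+1}-free; concretely, any two distinct vertices of G(q,t) have at most t common neighbors. -/
/-- The scaling relation by the subgroup `H ≤ Fˣ` on nonzero pairs of field elements:
`(a₁,b₁) ∼ (a₂,b₂)` iff there is `h ∈ H` with `a₁ = h·a₂` and `b₁ = h·b₂`. -/
def Grel {F : Type} [Field F] (H : Subgroup Fˣ) (p p' : {p : F × F // p ≠ 0}) : Prop :=
  ∃ h ∈ H, p.1.1 = (h : F) * p'.1.1 ∧ p.1.2 = (h : F) * p'.1.2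

/-- The vertex set of the graph `G(q,t)`: nonzero pairs modulo scaling by `H`. -/
def GVertex (F : Type) [Field F] (H : Subgroup Fˣ) : Type :=
  Quot (Grel H)

/-- Membership of a field element in the subgroup `H ≤ Fˣ`. -/
def memH {F : Type} [Field F] (H : Subgroup Fˣ) (x : F) : Prop :=
  ∃ h ∈ H, (h : F) = x

/-- Adjacency in the graph `G(q,t)`: `⟨a,b⟩` and `⟨x,y⟩` are adjacent iff `a·x + b·y ∈ H`
(this condition is independent of the chosen representatives). -/
def GAdj {F : Type} [Field F] (H : Subgroup Fˣ) (u v : GVertex F H) : Prop :=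
  ∃ p p' : {p : F × F // p ≠ 0},
    u = Quot.mk (Grel H) p ∧ v = Quot.mk (Grel H) p' ∧
      memH H (p.1.1 * p'.1.1 + p.1.2 * p'.1.2)

theorem Grel_equiv {F : Type} [Field F] (H : Subgroup Fˣ) : Equivalence (Grel H) := by
  refine ⟨fun p => ⟨1, H.one_mem, by simp, by simp⟩, ?_, ?_⟩
  · rintro p p' ⟨h, hh, h1, h2⟩
    refine ⟨h⁻¹, H.inv_mem hh, ?_, ?_⟩
    · rw [h1]; simp
    · rw [h2]; simp
  · rintro p p' p'' ⟨h, hh, h1, h2⟩ ⟨k, hk, k1, k2⟩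
    refine ⟨h * k, H.mul_mem hh hk, ?_, ?_⟩
    · rw [h1, k1]; push_cast; ring
    · rw [h2, k2]; push_cast; ring

theorem Grel_exact {F : Type} [Field F] {H : Subgroup Fˣ} {p p' : {p : F × F // p ≠ 0}}
    (h : Quot.mk (Grel H) p = Quot.mk (Grel H) p') : Grel H p p' :=
  (Grel_equiv H).eqvGen_iff.1 (Quot.eqvGen_exact h)

theorem GAdj_mk {F : Type} [Field F] {H : Subgroup Fˣ} {p p' : {p : F × F // p ≠ 0}}
    (h : GAdj H (Quot.mk (Grel H) p) (Quot.mk (Grel H) p')) :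
    ∃ g ∈ H, (g : F) = p.1.1 * p'.1.1 + p.1.2 * p'.1.2 := by
  obtain ⟨r, r', e, e', g, hg, hgr⟩ := h
  obtain ⟨k, hk, k1, k2⟩ := Grel_exact e
  obtain ⟨l, hl, l1, l2⟩ := Grel_exact e'
  refine ⟨k * l * g, H.mul_mem (H.mul_mem hk hl) hg, ?_⟩
  push_cast
  rw [k1, k2, l1, l2, hgr]; ring

theorem common_nbr {F : Type} [Field F] {H : Subgroup Fˣ} {u v : {p : F × F // p ≠ 0}}
    (w : GVertex F H) (h1 : GAdj H w (Quot.mk (Grel H) u)) (h2 : GAdj H w (Quot.mk (Grel H) v)) :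
    ∃ g : H, ∃ p : {p : F × F // p ≠ 0}, w = Quot.mk (Grel H) p ∧
      p.1.1 * u.1.1 + p.1.2 * u.1.2 = 1 ∧ p.1.1 * v.1.1 + p.1.2 * v.1.2 = ((g : Fˣ) : F) := by
  induction w using Quot.ind with
  | mk r =>
  obtain ⟨a, ha, ea⟩ := GAdj_mk h1
  obtain ⟨b, hb, eb⟩ := GAdj_mk h2
  have hai : ((a⁻¹ : Fˣ) : F) * (a : F) = 1 := by simp
  refine ⟨⟨a⁻¹ * b, H.mul_mem (H.inv_mem ha) hb⟩,
    ⟨(((a⁻¹ : Fˣ) : F) * r.1.1, ((a⁻¹ : Fˣ) : F) * r.1.2), ?_⟩, ?_, ?_, ?_⟩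
  · intro h0
    apply r.2
    have e1 := congrArg Prod.fst h0
    have e2 := congrArg Prod.snd h0
    simp only [Prod.fst_zero, Prod.snd_zero, mul_eq_zero, Units.ne_zero, false_or] at e1 e2
    exact Prod.ext e1 e2
  · apply Quot.sound
    refine ⟨a, ha, ?_, ?_⟩ <;> simp
  · rw [← hai, ea]; ring
  · rw [Units.val_mul, eb]; ring

/-- For an arbitrary prime power `q` and `t ∣ q−1`, the graph `G(q,t)` is `K_{2,t+1}`-free:
any two distinct vertices have at most `t` common neighbors. -/
theorem G_qt_K2_t1_free {q t : ℕ} (hq : IsPrimePow q) (ht : t ∣ q - 1)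
    {F : Type} [Field F] [Fintype F] (hF : Fintype.card F = q)
    (H : Subgroup Fˣ) (hH : Nat.card H = t)
    (u₁ u₂ : GVertex F H) (hne : u₁ ≠ u₂) :
    {w : GVertex F H | GAdj H w u₁ ∧ GAdj H w u₂}.ncard ≤ t := by
  classical
  subst hH
  induction u₁ using Quot.ind with
  | mk u =>
  induction u₂ using Quot.ind with
  | mk v =>
  rw [← Nat.card_coe_set_eq]
  choose f p hw h1 h2 using
    fun w : {w : GVertex F H | GAdj H w (Quot.mk (Grel H) u) ∧ GAdj H w (Quot.mk (Grel H) v)} =>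
      common_nbr w.1 w.2.1 w.2.2
  refine Nat.card_le_card_of_injective f ?_
  intro w w' hf
  have hdet : u.1.1 * v.1.2 - u.1.2 * v.1.1 ≠ 0 := by
    intro hd
    apply hne
    symm
    apply Quot.sound
    refine ⟨(f w : Fˣ), (f w).2, ?_, ?_⟩
    · rw [← h2 w]
      linear_combination (-v.1.1) * h1 w - (p w).1.2 * hd
    · rw [← h2 w]
      linear_combination (-v.1.2) * h1 w + (p w).1.1 * hd
  have e1 := h1 w
  have e2 := h2 w
  rw [← h1 w'] at e1
  rw [hf, ← h2 w'] at e2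
  apply Subtype.ext
  rw [hw w, hw w']
  congr 1
  apply Subtype.ext
  apply Prod.ext
  · apply mul_right_cancel₀ hdet
    linear_combination v.1.2 * e1 - u.1.2 * e2
  · apply mul_right_cancel₀ hdet
    linear_combination u.1.1 * e2 - v.1.1 * e1
end

section
/- Let q be a prime power, F a finite field with q² elements, and H the unique subgroup of F* of order q+1. For any nonzero a,b ∈ F, the equation a·x + b·y = 1 has at most two solutions (x,y) with x ∈ H and y ∈ H. -/
/-- Let `F` be a field with `q²` elements and `H` the unique subgroup of `Fˣ` of order
`q+1`. For nonzero `a, b ∈ F`, the equation `a·x + b·y = 1` has at most two solutions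
`(x,y)` with `x ∈ H` and `y ∈ H`. -/
theorem at_most_two_solutions {q : ℕ} (hq : IsPrimePow q)
    {F : Type} [Field F] [Fintype F] (hF : Fintype.card F = q ^ 2)
    (H : Subgroup Fˣ) (hH : Nat.card H = q + 1)
    (a b : F) (ha : a ≠ 0) (hb : b ≠ 0) :
    {p : F × F | (∃ h ∈ H, (h : F) = p.1) ∧ (∃ h ∈ H, (h : F) = p.2) ∧
      a * p.1 + b * p.2 = 1}.ncard ≤ 2 := by
  classical
  obtain ⟨p, k, hp, hk, rfl⟩ := hq
  have hp' : p.Prime := hp.nat_prime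
  haveI : Fact p.Prime := ⟨hp'⟩
  have h0 : ((p : ℕ) : F) = 0 := by
    have h := Nat.cast_card_eq_zero F
    rw [hF] at h
    push_cast at h
    exact eq_zero_of_pow_eq_zero (eq_zero_of_pow_eq_zero h)
  haveI : CharP F p := (CharP.charP_iff_prime_eq_zero hp').2 h0
  have hpow : ∀ h ∈ H, (h : F) ^ (p ^ k) * (h : F) = 1 := by
    intro h hh
    have h1 : (⟨h, hh⟩ : H) ^ (p ^ k + 1) = 1 := by
      rw [← hH]; exact pow_card_eq_one'
    have h2 : h ^ (p ^ k + 1) = 1 := by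
      simpa using congrArg Subtype.val h1
    have h3 := congrArg Units.val h2
    rw [← pow_succ]
    simpa using h3
  have key : ∀ x y : F, (∃ h ∈ H, (h : F) = x) → (∃ h ∈ H, (h : F) = y) → a * x + b * y = 1 →
      a * x ^ 2 + (b ^ (p ^ k) * b - a ^ (p ^ k) * a - 1) * x + a ^ (p ^ k) = 0 := by
    rintro x y ⟨u, hu, rfl⟩ ⟨v, hv, rfl⟩ h
    have h1 := hpow u hu
    have h2 := hpow v hv
    have h3 := congrArg (fun z => z ^ (p ^ k)) h
    simp only [add_pow_char_pow, mul_pow, one_pow] at h3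
    have h4 : a ^ (p ^ k) * (v : F) + b ^ (p ^ k) * (u : F) = (u : F) * v := by
      linear_combination (u : F) * v * h3 - a ^ (p ^ k) * v * h1 - b ^ (p ^ k) * u * h2
    linear_combination b * h4 + ((u : F) - a ^ (p ^ k)) * h
  by_contra hcon
  push Not at hcon
  rw [Set.two_lt_ncard (Set.toFinite _)] at hcon
  obtain ⟨⟨x₁, y₁⟩, ⟨hx₁, hy₁, e₁⟩, ⟨x₂, y₂⟩, ⟨hx₂, hy₂, e₂⟩, ⟨x₃, y₃⟩, ⟨hx₃, hy₃, e₃⟩,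
    n12, n13, n23⟩ := hcon
  have inj : ∀ x y x' y' : F, a * x + b * y = 1 → a * x' + b * y' = 1 → (x, y) ≠ (x', y') →
      x - x' ≠ 0 := by
    intro x y x' y' h h' hn hx
    obtain rfl := sub_eq_zero.1 hx
    apply hn
    have : b * y = b * y' := by linear_combination h - h'
    rw [mul_left_cancel₀ hb this]
  have k₁ := key _ _ hx₁ hy₁ e₁
  have k₂ := key _ _ hx₂ hy₂ e₂
  have k₃ := key _ _ hx₃ hy₃ e₃
  have d12 := inj _ _ _ _ e₁ e₂ n12
  have d13 := inj _ _ _ _ e₁ e₃ n13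
  have d23 := inj _ _ _ _ e₂ e₃ n23
  simp only at k₁ k₂ k₃
  set c := b ^ (p ^ k) * b - a ^ (p ^ k) * a - 1
  have f12 : a * (x₁ + x₂) + c = 0 := by
    apply mul_left_cancel₀ d12
    linear_combination k₁ - k₂
  have f13 : a * (x₁ + x₃) + c = 0 := by
    apply mul_left_cancel₀ d13
    linear_combination k₁ - k₃
  apply d23
  apply mul_left_cancel₀ ha
  linear_combination f12 - f13
end

section
/- Let q be a prime power, F a finite field with q² elements, H the unique subgroup of F* of order q+1, and a,b ∈ F nonzero. If x ∈ H and y ∈ H satisfy a·x + b·y = 1, then x is a root of the quadratic polynomial a·X² − (a^{q+1} − b^{q+1} + 1)·X + a^q, and y = (1 − a·x)/b. -/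
/-- Let `F` be a field with `q²` elements and `H` the unique subgroup of `Fˣ` of order
`q+1`. If `x, y ∈ H` satisfy `a·x + b·y = 1` with `a, b ≠ 0`, then `x` is a root of the
quadratic `a·X² − (a^{q+1} − b^{q+1} + 1)·X + a^q` and `y = (1 − a·x)/b`. -/
theorem solution_is_quadratic_root {q : ℕ} (hq : IsPrimePow q)
    {F : Type} [Field F] [Fintype F] (hF : Fintype.card F = q ^ 2)
    (H : Subgroup Fˣ) (hH : Nat.card H = q + 1)
    (a b : F) (ha : a ≠ 0) (hb : b ≠ 0)
    (x y : F) (hx : ∃ h ∈ H, (h : F) = x) (hy : ∃ h ∈ H, (h : F) = y)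
    (hxy : a * x + b * y = 1) :
    a * x ^ 2 - (a ^ (q + 1) - b ^ (q + 1) + 1) * x + a ^ q = 0 ∧
      y = (1 - a * x) / b := by
  have key : ∀ z : F, (∃ h ∈ H, (h : F) = z) → z ^ q * z = 1 := by
    rintro z ⟨h, hh, rfl⟩
    have h1 : (⟨h, hh⟩ : H) ^ (q + 1) = 1 := by
      rw [← hH]; exact pow_card_eq_one'
    have h2 : h ^ (q + 1) = 1 := by
      simpa using congrArg (Subtype.val) h1
    rw [← pow_succ, ← Units.val_pow_eq_pow_val, h2, Units.val_one]
  have hX := key x hx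
  have hY := key y hy
  obtain ⟨p, k, hp, hk, rfl⟩ := hq
  have hp' : p.Prime := hp.nat_prime
  have : Fact p.Prime := ⟨hp'⟩
  have : CharP F p := by
    obtain ⟨r, hr⟩ := CharP.exists F
    obtain ⟨n, hrp, hn⟩ := FiniteField.card F r
    have h1 : r ∣ p := by
      have h2 : r ∣ (p ^ k) ^ 2 := by
        rw [← hF, hn]; exact dvd_pow_self r n.ne_zero
      exact hrp.dvd_of_dvd_pow (hrp.dvd_of_dvd_pow h2)
    rw [← (Nat.prime_dvd_prime_iff_eq hrp hp').1 h1]; exact hr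
  have hfrob : a ^ p ^ k * x ^ p ^ k + b ^ p ^ k * y ^ p ^ k = 1 := by
    rw [← mul_pow, ← mul_pow, ← add_pow_char_pow, hxy, one_pow]
  refine ⟨?_, ?_⟩
  · rw [pow_succ a (p ^ k), pow_succ b (p ^ k)]
    generalize a ^ p ^ k = A at hfrob ⊢
    generalize b ^ p ^ k = B at hfrob ⊢
    generalize x ^ p ^ k = X at hfrob hX
    generalize y ^ p ^ k = Y at hfrob hY
    have hB : B * b = (1 - A * X) * (1 - a * x) := by
      have e1 : B * Y = 1 - A * X := by linear_combination hfrob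
      have e2 : b * y = 1 - a * x := by linear_combination hxy
      rw [← e1, ← e2]
      linear_combination (-B * b) * hY
    linear_combination x * hB + (-A + A * a * x) * hX
  · rw [eq_div_iff hb]
    linear_combination hxy
end

section
/- For an odd prime power q, the graph G(q², q+1) has exactly (q⁵ − q⁴ + q³ − 2q² + 1)/2 edges. -/
/-- The edge set of the graph `G(q,t)`: unordered pairs of distinct adjacent vertices. -/
def GEdges (F : Type) [Field F] (H : Subgroup Fˣ) : Set (Sym2 (GVertex F H)) :=
  {e | ∃ u v : GVertex F H, e = s(u, v) ∧ u ≠ v ∧ GAdj H u v}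

section helpers

variable {F : Type} [Field F] (H : Subgroup Fˣ)

lemma Grel_equiv_s9 : Equivalence (Grel H) where
  refl p := ⟨1, H.one_mem, by simp, by simp⟩
  symm := by
    rintro p p' ⟨h, hh, h1, h2⟩
    refine ⟨h⁻¹, H.inv_mem hh, ?_, ?_⟩
    · rw [h1]; simp
    · rw [h2]; simp
  trans := by
    rintro p p' p'' ⟨h, hh, h1, h2⟩ ⟨k, hk, h3, h4⟩
    refine ⟨h * k, H.mul_mem hh hk, ?_, ?_⟩
    · rw [h1, h3]; simp [mul_assoc]
    · rw [h2, h4]; simp [mul_assoc]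

lemma mk_eq_iff (p p' : {p : F × F // p ≠ 0}) :
    Quot.mk (Grel H) p = Quot.mk (Grel H) p' ↔ Grel H p p' := by
  rw [Quot.eq]
  exact (Grel_equiv_s9 H).eqvGen_iff

lemma GAdj_mk_iff (p p' : {p : F × F // p ≠ 0}) :
    GAdj H (Quot.mk _ p) (Quot.mk _ p') ↔ memH H (p.1.1 * p'.1.1 + p.1.2 * p'.1.2) := by
  constructor
  · rintro ⟨r, r', h1, h2, k, hk, e⟩
    obtain ⟨a, ha, a1, a2⟩ := (mk_eq_iff H _ _).1 h1
    obtain ⟨b, hb, b1, b2⟩ := (mk_eq_iff H _ _).1 h2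
    refine ⟨a * b * k, H.mul_mem (H.mul_mem ha hb) hk, ?_⟩
    rw [a1, a2, b1, b2]
    push_cast
    rw [e]; ring
  · intro h
    exact ⟨p, p', rfl, rfl, h⟩

lemma GAdj_symm {u v : GVertex F H} (h : GAdj H u v) : GAdj H v u := by
  obtain ⟨p, p', h1, h2, h3⟩ := h
  refine ⟨p', p, h2, h1, ?_⟩
  rwa [mul_comm p'.1.1, mul_comm p'.1.2]

def scaleP (h : Fˣ) (p : {p : F × F // p ≠ 0}) : {p : F × F // p ≠ 0} :=
  ⟨((h : F) * p.1.1, (h : F) * p.1.2), by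
    intro e
    apply p.2
    rw [Prod.ext_iff] at e ⊢
    simpa using e⟩

lemma mk_scaleP (h : Fˣ) (hh : h ∈ H) (p : {p : F × F // p ≠ 0}) :
    Quot.mk (Grel H) (scaleP h p) = Quot.mk (Grel H) p :=
  (mk_eq_iff H _ _).2 ⟨h, hh, rfl, rfl⟩

lemma scaleP_inj (h k : Fˣ) (p : {p : F × F // p ≠ 0}) (e : scaleP h p = scaleP k p) :
    h = k := by
  have e1 : (h : F) * p.1.1 = (k : F) * p.1.1 := congrArg (fun z => z.1.1) e
  have e2 : (h : F) * p.1.2 = (k : F) * p.1.2 := congrArg (fun z => z.1.2) e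
  have hp := p.2
  by_cases h1 : p.1.1 = 0
  · have h2 : p.1.2 ≠ 0 := fun h2 => hp (Prod.ext h1 h2)
    exact Units.ext (mul_right_cancel₀ h2 e2)
  · exact Units.ext (mul_right_cancel₀ h1 e1)

lemma card_lift (R : GVertex F H → Prop) :
    Nat.card {p : {p : F × F // p ≠ 0} // R (Quot.mk _ p)} =
      Nat.card {u // R u} * Nat.card H := by
  rw [← Nat.card_prod]
  symm
  have hout : ∀ u : GVertex F H, Quot.mk (Grel H) (Quot.out u) = u := fun u => Quot.out_eq u
  refine Nat.card_congr (Equiv.ofBijective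
    (fun x : {u // R u} × H => (⟨scaleP (x.2 : Fˣ) (Quot.out x.1.1), by
      rw [mk_scaleP H _ x.2.2, hout]; exact x.1.2⟩ :
        {p : {p : F × F // p ≠ 0} // R (Quot.mk _ p)})) ⟨?_, ?_⟩)
  · rintro ⟨⟨u, hu⟩, h⟩ ⟨⟨v, hv⟩, k⟩ e
    have e' : scaleP (h : Fˣ) (Quot.out u) = scaleP (k : Fˣ) (Quot.out v) :=
      congrArg Subtype.val e
    have huv : u = v := by
      rw [← hout u, ← hout v, ← mk_scaleP H _ h.2, ← mk_scaleP H _ k.2 (Quot.out v), e']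
    subst huv
    have := scaleP_inj _ _ _ e'
    simp [Subtype.ext this]
  · rintro ⟨p, hp⟩
    obtain ⟨h, hh, h1, h2⟩ := (mk_eq_iff H p (Quot.out (Quot.mk (Grel H) p))).1 (hout _).symm
    refine ⟨(⟨Quot.mk _ p, hp⟩, ⟨h, hh⟩), ?_⟩
    apply Subtype.ext
    apply Subtype.ext
    exact Prod.ext h1.symm h2.symm

lemma card_nbr (p : {p : F × F // p ≠ 0}) :
    Nat.card {p' : {p : F × F // p ≠ 0} // memH H (p.1.1 * p'.1.1 + p.1.2 * p'.1.2)} =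
      Nat.card H * Nat.card F := by
  rw [← Nat.card_prod]
  symm
  obtain ⟨⟨a, b⟩, hp⟩ := p
  by_cases ha : a = 0
  · have hb : b ≠ 0 := fun hb => hp (Prod.ext ha hb)
    subst ha
    refine Nat.card_congr (Equiv.ofBijective
      (fun x : H × F => ⟨⟨(x.2, ((x.1 : Fˣ) : F) / b), ?_⟩, ?_⟩) ⟨?_, ?_⟩)
    · intro e
      have := congrArg Prod.snd e
      simp [hb] at this
    · exact ⟨x.1, x.1.2, by simp; field_simp⟩
    · rintro ⟨h, x⟩ ⟨k, y⟩ e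
      have e1 := congrArg (fun z => z.1.1.1) e
      have e2 := congrArg (fun z => z.1.1.2) e
      simp only at e1 e2
      rw [div_left_inj' hb] at e2
      exact Prod.ext (Subtype.ext (Units.ext e2)) e1
    · rintro ⟨⟨⟨x, y⟩, hxy⟩, h, hh, e⟩
      refine ⟨(⟨h, hh⟩, x), ?_⟩
      simp only at e
      refine Subtype.ext (Subtype.ext (Prod.ext rfl ?_))
      change (h : F) / b = y
      rw [e]; field_simp; ring
  · refine Nat.card_congr (Equiv.ofBijective
      (fun x : H × F => ⟨⟨((((x.1 : Fˣ) : F) - b * x.2) / a, x.2), ?_⟩, ?_⟩) ⟨?_, ?_⟩)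
    · intro e
      have e1 := congrArg Prod.fst e
      have e2 := congrArg Prod.snd e
      simp only [Prod.snd_zero] at e2
      simp [ha, e2] at e1
    · exact ⟨x.1, x.1.2, by simp only; field_simp; ring⟩
    · rintro ⟨h, x⟩ ⟨k, y⟩ e
      have e1 := congrArg (fun z => z.1.1.1) e
      have e2 := congrArg (fun z => z.1.1.2) e
      simp only at e1 e2
      rw [div_left_inj' ha, e2, sub_left_inj] at e1
      exact Prod.ext (Subtype.ext (Units.ext e1)) e2
    · rintro ⟨⟨⟨x, y⟩, hxy⟩, h, hh, e⟩
      refine ⟨(⟨h, hh⟩, y), ?_⟩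
      simp only at e
      refine Subtype.ext (Subtype.ext (Prod.ext ?_ rfl))
      change ((h : F) - b * y) / a = x
      rw [e]; field_simp; ring

lemma card_loop (h2 : (2 : F) ≠ 0) (i : F) (hi : i * i = -1) :
    Nat.card {p : {p : F × F // p ≠ 0} // memH H (p.1.1 * p.1.1 + p.1.2 * p.1.2)} =
      Nat.card H * Nat.card Fˣ := by
  have hi0 : i ≠ 0 := by rintro rfl; simp at hi
  have key : ∀ u v : F, ((u + v) / 2) * ((u + v) / 2) +
      (-i * (u - v) / 2) * (-i * (u - v) / 2) = u * v := by
    intro u v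
    field_simp
    linear_combination (u - v) ^ 2 * hi
  rw [← Nat.card_prod]
  symm
  refine Nat.card_congr (Equiv.ofBijective
      (fun x : H × Fˣ => ⟨⟨(((x.2 : F) + (((x.1 : Fˣ) * x.2⁻¹ : Fˣ) : F)) / 2,
        -i * ((x.2 : F) - (((x.1 : Fˣ) * x.2⁻¹ : Fˣ) : F)) / 2), ?_⟩, ?_⟩) ⟨?_, ?_⟩)
  · intro e
    have e1 := congrArg Prod.fst e
    have e2 := congrArg Prod.snd e
    simp only [Prod.snd_zero, Prod.fst_zero] at e1 e2
    have := key x.2 (((x.1 : Fˣ) * x.2⁻¹ : Fˣ) : F)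
    rw [e1, e2] at this
    simp at this
  · refine ⟨x.1, x.1.2, ?_⟩
    simp only
    rw [key]
    push_cast
    field_simp
  · rintro ⟨h, x⟩ ⟨k, y⟩ e
    have e1 := congrArg (fun z => z.1.1.1) e
    have e2 := congrArg (fun z => z.1.1.2) e
    simp only at e1 e2
    rw [div_left_inj' h2] at e1 e2
    have e2' := mul_left_cancel₀ (neg_ne_zero.2 hi0) e2
    have hx : (x : F) = y := by
      apply mul_left_cancel₀ h2
      linear_combination e1 + e2'
    have hx' : x = y := Units.ext hx
    subst hx'
    have e3 := Units.ext (add_left_cancel e1)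
    have e4 := mul_right_cancel e3
    exact Prod.ext (Subtype.ext e4) rfl
  · rintro ⟨⟨⟨a, b⟩, hab⟩, h, hh, e⟩
    simp only at e
    have e' : (a + i * b) * (a - i * b) = h := by
      rw [e]; linear_combination -b ^ 2 * hi
    have hu : a + i * b ≠ 0 := by
      intro h0
      rw [h0, zero_mul] at e'
      exact h.ne_zero e'.symm
    refine ⟨(⟨h, hh⟩, Units.mk0 _ hu), ?_⟩
    have e5 : ((h * (Units.mk0 _ hu)⁻¹ : Fˣ) : F) = a - i * b := by
      rw [← mul_right_inj' hu, e']
      push_cast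
      simp only [Units.val_mk0]
      field_simp
    refine Subtype.ext (Subtype.ext (Prod.ext ?_ ?_))
    · change (a + i * b + ((h * (Units.mk0 _ hu)⁻¹ : Fˣ) : F)) / 2 = a
      rw [e5]
      field_simp; ring
    · change -i * (a + i * b - ((h * (Units.mk0 _ hu)⁻¹ : Fˣ) : F)) / 2 = b
      rw [e5]
      field_simp
      linear_combination (-2 * b) * hi

def GGraph : SimpleGraph (GVertex F H) where
  Adj u v := u ≠ v ∧ GAdj H u v
  symm := ⟨fun _ _ h => ⟨h.1.symm, GAdj_symm H h.2⟩⟩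
  loopless := ⟨fun _ h => h.1 rfl⟩

lemma GEdges_eq : GEdges F H = (GGraph H).edgeSet := by
  ext e
  constructor
  · rintro ⟨u, v, rfl, h⟩
    exact h
  · induction e with
    | _ u v =>
      intro h
      exact ⟨u, v, rfl, h⟩

open Classical in
lemma count_edges [Finite (GVertex F H)] (d : ℕ)
    (hd : ∀ u, Nat.card {v // GAdj H u v} = d) :
    2 * (GEdges F H).ncard + Nat.card {u // GAdj H u u} = Nat.card (GVertex F H) * d := by
  haveI := Fintype.ofFinite (GVertex F H)
  rw [GEdges_eq, ← SimpleGraph.coe_edgeFinset, Set.ncard_coe_finset,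
    ← SimpleGraph.sum_degrees_eq_twice_card_edges]
  have h1 : Nat.card {u // GAdj H u u} = ∑ u : GVertex F H, if GAdj H u u then 1 else 0 := by
    rw [Nat.card_eq_fintype_card, Fintype.card_subtype, Finset.card_filter]
  rw [h1, ← Finset.sum_add_distrib]
  rw [Nat.card_eq_fintype_card, ← smul_eq_mul]
  apply Finset.sum_eq_card_nsmul
  intro u _
  rw [← hd u, Nat.card_eq_fintype_card, Fintype.card_subtype,
    ← SimpleGraph.card_neighborFinset_eq_degree]
  have h2 : (GGraph H).neighborFinset u = (Finset.univ.filter (fun v => GAdj H u v)).erase u := by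
    ext v
    rw [SimpleGraph.mem_neighborFinset]
    simp [GGraph, eq_comm]
  rw [h2]
  split_ifs with h
  · exact Finset.card_erase_add_one (by simpa using h)
  · rw [Finset.erase_eq_of_notMem (by simpa using h), add_zero]

end helpers

/-- For an odd prime power `q`, the graph `G(q², q+1)` has exactly
`(q⁵ − q⁴ + q³ − 2q² + 1)/2` edges. -/
theorem GEdges_card_odd {q : ℕ} (hq : IsPrimePow q) (hodd : Odd q)
    {F : Type} [Field F] [Fintype F] (hF : Fintype.card F = q ^ 2)
    (H : Subgroup Fˣ) (hH : Nat.card H = q + 1) :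
    2 * ((GEdges F H).ncard : ℤ) =
      (q : ℤ) ^ 5 - (q : ℤ) ^ 4 + (q : ℤ) ^ 3 - 2 * (q : ℤ) ^ 2 + 1 := by
  classical
  have hF' : Nat.card F = q ^ 2 := by rw [Nat.card_eq_fintype_card, hF]
  have hmod : q ^ 2 % 4 = 1 := by
    obtain ⟨k, rfl⟩ := hodd
    have : (2 * k + 1) ^ 2 = 4 * (k ^ 2 + k) + 1 := by ring
    omega
  have h2 : (2 : F) ≠ 0 := by
    apply Ring.two_ne_zero
    intro h
    have := FiniteField.even_card_of_char_two h
    rw [hF] at this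
    omega
  obtain ⟨i, hi⟩ : IsSquare (-1 : F) := by
    rw [FiniteField.isSquare_neg_one_iff, hF]
    omega
  haveI : Finite (GVertex F H) := Finite.of_surjective (Quot.mk (Grel H)) Quot.mk_surjective
  have hq1 : 0 < q + 1 := Nat.succ_pos _
  have hdeg : ∀ u, Nat.card {v // GAdj H u v} = q ^ 2 := by
    intro u
    obtain ⟨p, rfl⟩ := Quot.mk_surjective u
    have := card_lift H (fun v => GAdj H (Quot.mk _ p) v)
    simp only [GAdj_mk_iff] at this
    rw [card_nbr, hH, hF', mul_comm] at this
    exact (Nat.eq_of_mul_eq_mul_right hq1 this).symm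
  have hmain := count_edges H _ hdeg
  have hU : Nat.card Fˣ + 1 = q ^ 2 := by
    rw [Nat.card_units, hF']
    have : 0 < q ^ 2 := pow_pos hq.pos 2
    omega
  have hloop : Nat.card {u // GAdj H u u} = Nat.card Fˣ := by
    have := card_lift H (fun v => GAdj H v v)
    simp only [GAdj_mk_iff] at this
    rw [card_loop H h2 i hi.symm, hH, mul_comm] at this
    exact (Nat.eq_of_mul_eq_mul_right hq1 this).symm
  have hV : Nat.card (GVertex F H) * (q + 1) + 1 = q ^ 4 := by
    have := card_lift H (fun _ => True)
    rw [hH, Nat.card_congr (Equiv.subtypeUnivEquiv (fun _ => trivial)),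
      Nat.card_congr (Equiv.subtypeUnivEquiv (fun _ => trivial))] at this
    rw [← this]
    have h3 : Nat.card {p : F × F // p ≠ 0} = Nat.card (F × F) - 1 := by
      rw [Nat.card_eq_fintype_card, Nat.card_eq_fintype_card]
      have := Fintype.card_subtype_compl (fun p : F × F => p = 0)
      rw [Fintype.card_subtype_eq] at this
      convert this
    rw [h3, Nat.card_prod, hF']
    have : 0 < q ^ 4 := pow_pos hq.pos 4
    have h5 : q ^ 2 * q ^ 2 = q ^ 4 := by ring
    omega
  rw [hloop] at hmain
  zify at hmain hU hV
  have hV' : (Nat.card (GVertex F H) : ℤ) = (q ^ 2 + 1) * (q - 1) := by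
    have : ((q : ℤ) + 1) ≠ 0 := by positivity
    apply mul_right_cancel₀ this
    linear_combination hV
  rw [hV'] at hmain
  linear_combination hmain - hU
end

section
/- Let q be a prime power, t a divisor of q−1, F a finite field with q² elements, and H the unique subgroup of F* of order t(q+1). For any nonzero α,β ∈ F, the number of pairs (r,s) with r ∈ H, s ∈ H and α·r + β·s = 1 is at most 2t². -/
open Polynomial in
theorem aux_quadratic {F : Type} [Field F] [DecidableEq F] (c d : F) (A : Finset F)
    (hA : ∀ z ∈ A, z ^ 2 - c * z + d = 0) : A.card ≤ 2 := by
  have hdeg : (X ^ 2 - C c * X + C d : F[X]).natDegree = 2 := by compute_degree!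
  have hne : (X ^ 2 - C c * X + C d : F[X]) ≠ 0 := by
    intro h; rw [h] at hdeg; simp at hdeg
  have hsub : A ⊆ (X ^ 2 - C c * X + C d : F[X]).roots.toFinset := by
    intro z hz
    rw [Multiset.mem_toFinset, mem_roots hne]
    simpa using hA z hz
  calc A.card ≤ _ := Finset.card_le_card hsub
    _ ≤ _ := Multiset.toFinset_card_le _
    _ ≤ _ := card_roots' _
    _ = 2 := hdeg

theorem aux_one_sub {q : ℕ} (hq : IsPrimePow q) {F : Type} [Field F] [Fintype F]
    (hF : Fintype.card F = q ^ 2) (z : F) : (1 - z) ^ q = 1 - z ^ q := by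
  obtain ⟨p, k, hp, hk, rfl⟩ := hq
  have hp' : p.Prime := hp.nat_prime
  have : Fact p.Prime := ⟨hp'⟩
  obtain ⟨p', hc⟩ := CharP.exists F
  obtain ⟨n, hp2, hn⟩ := FiniteField.card F p'
  have : p' = p := by
    rw [hn, ← pow_mul] at hF
    have h : p' ∣ p ^ (k * 2) := hF ▸ dvd_pow_self p' n.ne_zero
    exact (Nat.prime_dvd_prime_iff_eq hp2 hp').1 (hp2.dvd_of_dvd_pow h)
  subst this
  rw [sub_pow_char_pow, one_pow]

/-- Let `q` be a prime power, `t ∣ q−1`, `F` a field with `q²` elements and `H` the unique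
subgroup of `Fˣ` of order `t(q+1)`. For nonzero `α, β ∈ F`, the number of pairs `(r,s)`
with `r, s ∈ H` and `α·r + β·s = 1` is at most `2t²`. -/
theorem at_most_2t2_solutions {q t : ℕ} (hq : IsPrimePow q) (ht : t ∣ q - 1)
    {F : Type} [Field F] [Fintype F] (hF : Fintype.card F = q ^ 2)
    (H : Subgroup Fˣ) (hH : Nat.card H = t * (q + 1))
    (α β : F) (hα : α ≠ 0) (hβ : β ≠ 0) :
    {p : F × F | (∃ h ∈ H, (h : F) = p.1) ∧ (∃ h ∈ H, (h : F) = p.2) ∧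
      α * p.1 + β * p.2 = 1}.ncard ≤ 2 * t ^ 2 := by
  classical
  have hq2 : 2 ≤ q := hq.two_le
  have htpos : 0 < t := Nat.pos_of_dvd_of_pos ht (by omega)
  have hpow : ∀ x : F, (∃ h ∈ H, (h : F) = x) → (x ^ (q + 1)) ^ t = 1 := by
    rintro x ⟨h, hh, rfl⟩
    have h1 : (⟨h, hh⟩ : H) ^ Nat.card H = 1 := pow_card_eq_one'
    have h2 : h ^ Nat.card H = 1 := congrArg Subtype.val h1
    rw [← pow_mul, mul_comm, ← hH, ← Units.val_pow_eq_pow_val, h2, Units.val_one]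
  rw [Set.ncard_eq_toFinset_card']
  set S := Set.toFinset {p : F × F | (∃ h ∈ H, (h : F) = p.1) ∧ (∃ h ∈ H, (h : F) = p.2) ∧
      α * p.1 + β * p.2 = 1} with hS
  let T : Finset F := (Polynomial.nthRoots t (1 : F)).toFinset
  have hT : T.card ≤ t := (Multiset.toFinset_card_le _).trans (Polynomial.card_nthRoots t 1)
  have hmem : ∀ p ∈ S, (p.1 ^ (q + 1), p.2 ^ (q + 1)) ∈ T ×ˢ T := by
    intro p hp
    simp only [hS, Set.mem_toFinset, Set.mem_ofPred_eq] at hp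
    simp only [T, Finset.mem_product, Multiset.mem_toFinset, Polynomial.mem_nthRoots htpos]
    exact ⟨hpow _ hp.1, hpow _ hp.2.1⟩
  have key := Finset.card_le_mul_card_image_of_maps_to (s := S) (t := T ×ˢ T)
    (f := fun p => (p.1 ^ (q + 1), p.2 ^ (q + 1))) hmem 2 ?_
  · refine key.trans ?_
    rw [Finset.card_product, sq]
    exact Nat.mul_le_mul_left _ (Nat.mul_le_mul hT hT)
  · rintro ⟨a, b⟩ -
    have hinj : Set.InjOn (fun p : F × F => α * p.1)
        (S.filter fun p => (p.1 ^ (q + 1), p.2 ^ (q + 1)) = (a, b) : Finset (F × F)) := by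
      rintro ⟨x, y⟩ h1 ⟨x', y'⟩ h2 h
      simp only [hS, Finset.coe_filter, Set.mem_toFinset, Set.mem_ofPred_eq] at h1 h2
      have e1 := h1.1.2.2
      have e2 := h2.1.2.2
      have hx : x = x' := mul_left_cancel₀ hα h
      subst hx
      have hy : y = y' := mul_left_cancel₀ hβ (by linear_combination e1 - e2)
      rw [hy]
    rw [← Finset.card_image_of_injOn hinj]
    refine aux_quadratic (1 + α ^ (q + 1) * a - β ^ (q + 1) * b) (α ^ (q + 1) * a) _ ?_
    intro z hz
    obtain ⟨⟨x, y⟩, hp, rfl⟩ := Finset.mem_image.1 hz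
    simp only [hS, Finset.mem_filter, Set.mem_toFinset, Set.mem_ofPred_eq, Prod.mk.injEq] at hp
    obtain ⟨⟨-, -, e⟩, rfl, rfl⟩ := hp
    have h1 := aux_one_sub hq hF (α * x)
    have h2 : 1 - α * x = β * y := by linear_combination -e
    simp only [← mul_pow]
    rw [← h2, pow_succ (1 - α * x), h1, pow_succ]
    ring
end

section
/- Let q be a prime power, r ≥ 1 an integer, F a finite field with q^r elements, and N : F → F the map x ↦ x^{1+q+⋯+q^{r−1}} (the norm of F over its subfield with q elements). Let c₁,…,c_r, d₁,…,d_r ∈ F with d_i ≠ d_j for all i ≠ j. Then the system of equations N(x+d₁)=c₁, N(x+d₂)=c₂, …, N(x+d_r)=c_r has at most r! solutions x ∈ F. -/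
open MvPolynomial

/-- A polynomial vanishing at a point lies in the ideal of the point. -/
lemma mem_point_ideal {ι K : Type*} [Field K] (I : Ideal (MvPolynomial ι K)) (y : ι → K)
    (h : ∀ i, X i - C (y i) ∈ I) (p : MvPolynomial ι K) : p - C (eval y p) ∈ I := by
  induction p using MvPolynomial.induction_on with
  | C a => simp
  | add p q hp hq =>
    have := I.add_mem hp hq
    simp only [map_add]
    convert this using 1
    ring
  | mul_X p i hp =>
    have := I.add_mem (I.mul_mem_right (X i) hp) (I.mul_mem_left (C (eval y p)) (h i))
    simp only [map_mul, eval_X]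
    convert this using 1
    ring

lemma mem_of_vanish {ι K : Type*} [Fintype ι] [DecidableEq ι] [Field K] (a : ι → ι → K)
    (ha : ∀ i, Function.Injective (a i)) (I : Ideal (MvPolynomial ι K))
    (hI : ∀ j, ∏ i, (X i - C (a i j)) ∈ I) (p : MvPolynomial ι K)
    (hp : ∀ σ : Equiv.Perm ι, eval (fun i => a i (σ i)) p = 0) : p ∈ I := by
  by_contra hpI
  let J : Ideal (MvPolynomial ι K) :=
    Submodule.comap (LinearMap.toSpanSingleton (MvPolynomial ι K) (MvPolynomial ι K) p) I
  have hJ : ∀ b, b ∈ J ↔ b * p ∈ I := fun b => by simp [J]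
  have hJt : J ≠ ⊤ := by
    intro h
    have := (hJ 1).1 (h ▸ Submodule.mem_top)
    simp at this
    exact hpI this
  obtain ⟨M, hM, hJM⟩ := Ideal.exists_le_maximal J hJt
  have hIM : I ≤ M := fun b hb => hJM ((hJ b).2 (I.mul_mem_right _ hb))
  have huniq : ∀ i j j', X i - C (a i j) ∈ M → X i - C (a i j') ∈ M → j = j' := by
    intro i j j' h h'
    by_contra hne
    have h2 := M.sub_mem h' h
    have h3 : (X i - C (a i j')) - (X i - C (a i j)) = C (a i j - a i j') := by
      simp
    rw [h3] at h2
    refine hM.ne_top (M.eq_top_of_isUnit_mem h2 ?_)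
    apply IsUnit.map
    exact (sub_ne_zero.2 fun h => hne (ha i h)).isUnit
  have hex : ∀ j, ∃ i, X i - C (a i j) ∈ M := by
    intro j
    have := hIM (hI j)
    rw [hM.isPrime.prod_mem_iff] at this
    simpa using this
  choose τ hτ using hex
  have hτi : Function.Injective τ := by
    intro j j' h
    exact huniq (τ j) j j' (hτ j) (h ▸ hτ j')
  let e : Equiv.Perm ι := Equiv.ofBijective τ (Finite.injective_iff_bijective.1 hτi)
  let σ := e.symm
  have he : ∀ j, e j = τ j := fun j => rfl
  let u : MvPolynomial ι K := ∏ j, ∏ i ∈ Finset.univ.erase (τ j), (X i - C (a i j))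
  have hu : u ∉ M := by
    intro h
    rw [hM.isPrime.prod_mem_iff] at h
    obtain ⟨j, -, h⟩ := h
    rw [hM.isPrime.prod_mem_iff] at h
    obtain ⟨i, hi, h⟩ := h
    have h1 := hτ (σ i)
    have h2 : τ (σ i) = i := e.apply_symm_apply i
    rw [h2] at h1
    have := huniq i _ _ h h1
    rw [this, h2] at hi
    simp at hi
  apply hu
  apply hJM
  rw [hJ]
  let J' : Ideal (MvPolynomial ι K) :=
    Submodule.comap (LinearMap.toSpanSingleton (MvPolynomial ι K) (MvPolynomial ι K) u) I
  have hJ' : ∀ b, b ∈ J' ↔ b * u ∈ I := fun b => by simp [J']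
  rw [mul_comm, ← hJ']
  have := mem_point_ideal J' (fun i => a i (σ i)) ?_ p
  · rwa [hp σ, map_zero, sub_zero] at this
  intro i
  rw [hJ']
  have h2 : τ (σ i) = i := e.apply_symm_apply i
  have h3 : u = (∏ k ∈ Finset.univ.erase i, (X k - C (a k (σ i)))) *
      ∏ j ∈ Finset.univ.erase (σ i), ∏ k ∈ Finset.univ.erase (τ j), (X k - C (a k j)) := by
    simp only [u]
    rw [← Finset.mul_prod_erase Finset.univ _ (Finset.mem_univ (σ i)), h2]
  rw [h3, ← mul_assoc, Finset.mul_prod_erase Finset.univ (fun k => X k - C (a k (σ i)))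
    (Finset.mem_univ i)]
  exact I.mul_mem_right _ (hI _)

lemma exists_interp {ι K : Type*} [Fintype ι] [DecidableEq ι] [Field K] (a : ι → ι → K)
    (ha : ∀ i, Function.Injective (a i)) :
    ∃ e : Equiv.Perm ι → MvPolynomial ι K, ∀ p : MvPolynomial ι K,
      ∃ w : Equiv.Perm ι → K, ∀ τ : Equiv.Perm ι,
        eval (fun i => a i (τ i)) (p - ∑ σ, C (w σ) * e σ) = 0 := by
  let e : Equiv.Perm ι → MvPolynomial ι K := fun σ =>
    ∏ i, ∏ j ∈ Finset.univ.erase (σ i), (X i - C (a i j))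
  have h1 : ∀ σ τ : Equiv.Perm ι, σ ≠ τ → eval (fun i => a i (τ i)) (e σ) = 0 := by
    intro σ τ h
    obtain ⟨i, hi⟩ : ∃ i, σ i ≠ τ i := by
      by_contra! h'
      exact h (Equiv.ext h')
    simp only [e, map_prod]
    refine Finset.prod_eq_zero (Finset.mem_univ i) (Finset.prod_eq_zero (i := τ i) ?_ ?_)
    · simp [hi.symm]
    · simp
  have h2 : ∀ σ : Equiv.Perm ι, eval (fun i => a i (σ i)) (e σ) ≠ 0 := by
    intro σ
    simp only [e, map_prod]
    refine Finset.prod_ne_zero_iff.2 fun i _ => Finset.prod_ne_zero_iff.2 fun j hj => ?_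
    simp only [map_sub, eval_X, eval_C]
    refine sub_ne_zero.2 fun h => ?_
    have := ha i h
    simp [this] at hj
  refine ⟨e, fun p => ⟨fun σ => eval (fun i => a i (σ i)) p / eval (fun i => a i (σ i)) (e σ), ?_⟩⟩
  intro τ
  rw [map_sub, map_sum, Finset.sum_eq_single τ]
  · simp [h2 τ]
  · intro σ _ h
    rw [map_mul, h1 σ τ h, mul_zero]
  · simp

lemma X_integral {ι K : Type*} [Fintype ι] [DecidableEq ι] [Field K] (a : ι → ι → K)
    (ha : ∀ i, Function.Injective (a i)) (i₀ : ι) :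
    IsIntegral (Algebra.adjoin K (Set.range fun j =>
      (∏ i, (X i - C (a i j)) : MvPolynomial ι K))) (X i₀ : MvPolynomial ι K) := by
  set A := Algebra.adjoin K (Set.range fun j =>
      (∏ i, (X i - C (a i j)) : MvPolynomial ι K)) with hA
  let L := FractionRing (MvPolynomial ι K)
  let φ : MvPolynomial ι K →+* L := algebraMap _ _
  have hφ : Function.Injective φ := IsFractionRing.injective (MvPolynomial ι K) L
  have hkey : φ (X i₀) ∈ (integralClosure A L).toSubring := by
    by_contra hnot
    have : IsIntegrallyClosedIn (integralClosure A L).toSubring L :=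
      inferInstanceAs (IsIntegrallyClosedIn (integralClosure A L) L)
    obtain ⟨V, hV, hcon⟩ := Subring.exists_le_valuationSubring_of_isIntegrallyClosedIn hnot
    have hVA : ∀ b ∈ A, φ b ∈ V := fun b hb =>
      hV ((integralClosure A L).algebraMap_mem (⟨b, hb⟩ : A))
    have hC : ∀ x : K, φ (C x) ∈ V := fun x => hVA _ (A.algebraMap_mem x)
    -- units
    have hun : ∀ x : K, x ≠ 0 → V.valuation (φ (C x)) = 1 := by
      intro x hx
      refine le_antisymm ((V.valuation_le_one_iff _).2 (hC x)) ?_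
      have h1 := (V.valuation_le_one_iff _).2 (hC x⁻¹)
      have h2 : V.valuation (φ (C x)) * V.valuation (φ (C x⁻¹)) = 1 := by
        rw [← map_mul, ← map_mul, ← map_mul, mul_inv_cancel₀ hx]; simp
      calc (1 : V.ValueGroup) = _ := h2.symm
        _ ≤ V.valuation (φ (C x)) * 1 := by gcongr
        _ = _ := mul_one _
    have hex : ∃ j, ∀ i, φ (X i) ∈ V → 1 ≤ V.valuation (φ (X i - C (a i j))) := by
      by_contra! h
      choose τ hτ hτ' using h
      have hτi : Function.Injective τ := by
        intro j j' h
        by_contra hne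
        have h1 := hτ' j
        have h2 := hτ' j'
        rw [← h] at h2
        have h3 := hun (a (τ j) j - a (τ j) j') (sub_ne_zero.2 fun h => hne (ha _ h))
        have h4 : φ (C (a (τ j) j - a (τ j) j')) =
          φ (X (τ j) - C (a (τ j) j')) - φ (X (τ j) - C (a (τ j) j)) := by
          rw [← map_sub]; congr 1; simp
        rw [h4] at h3
        have := V.valuation.map_sub_lt h2 h1
        exact this.ne h3
      obtain ⟨j, hj⟩ := (Finite.injective_iff_surjective.1 hτi) i₀
      exact hcon (hj ▸ hτ j)
    obtain ⟨j, hj⟩ := hex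
    have hout : ∀ i, φ (X i) ∉ V → 1 < V.valuation (φ (X i - C (a i j))) := by
      intro i hi
      rw [← not_le, V.valuation_le_one_iff]
      intro h
      apply hi
      have := V.add_mem _ _ h (hC (a i j))
      rwa [← map_add, sub_add_cancel] at this
    have hle : V.valuation (φ (∏ i, (X i - C (a i j)))) ≤ 1 :=
      (V.valuation_le_one_iff _).2 (hVA _ (Algebra.subset_adjoin ⟨j, rfl⟩))
    have hge : ∀ i, 1 ≤ V.valuation (φ (X i - C (a i j))) := fun i => by
      by_cases h : φ (X i) ∈ V
      · exact hj i h
      · exact (hout i h).le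
    rw [map_prod, map_prod, ← Finset.mul_prod_erase Finset.univ _ (Finset.mem_univ i₀)] at hle
    have h5 : 1 ≤ ∏ i ∈ Finset.univ.erase i₀, V.valuation (φ (X i - C (a i j))) :=
      Finset.one_le_prod' fun i _ => hge i
    have h6 := hout i₀ hcon
    exact absurd (lt_of_lt_of_le h6 (le_mul_of_one_le_right' h5)) (not_lt.2 hle)
  exact (isIntegral_algebraMap_iff hφ).1 (show IsIntegral A (algebraMap _ L (X i₀)) from hkey)

lemma exists_monic {ι K : Type} [Fintype ι] [DecidableEq ι] [Field K] (a : ι → ι → K)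
    (ha : ∀ i, Function.Injective (a i)) (i₀ : ι) (c : ι → K) :
    ∃ P : Polynomial K, P ≠ 0 ∧ P.natDegree ≤ (Fintype.card ι).factorial ∧
      ∀ y : ι → K, (∀ j, ∏ i, (y i - a i j) = c j) → P.eval (y i₀) = 0 := by
  by_cases hsol : ∃ y : ι → K, ∀ j, ∏ i, (y i - a i j) = c j
  swap
  · exact ⟨1, one_ne_zero, by simp, fun y hy => absurd ⟨y, hy⟩ hsol⟩
  obtain ⟨y₀, hy₀⟩ := hsol
  let f : ι → MvPolynomial ι K := fun j => ∏ i, (X i - C (a i j))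
  let A := Algebra.adjoin K (Set.range f)
  have hint : ∀ i, IsIntegral A (X i : MvPolynomial ι K) := X_integral a ha
  have hft : Algebra.adjoin A (Set.range (X : ι → MvPolynomial ι K)) = ⊤ := by
    rw [eq_top_iff]
    intro p _
    induction p using MvPolynomial.induction_on with
    | C x => exact Subalgebra.algebraMap_mem _ (algebraMap K A x)
    | add p q hp hq => exact add_mem (hp trivial) (hq trivial)
    | mul_X p i hp => exact mul_mem (hp trivial) (Algebra.subset_adjoin ⟨i, rfl⟩)
  have hfin : Module.Finite A (MvPolynomial ι K) := by
    constructor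
    have := fg_adjoin_of_finite (R := A) (Set.finite_range (X : ι → MvPolynomial ι K))
      (by rintro _ ⟨i, rfl⟩; exact hint i)
    rwa [hft] at this
  have hInt : Algebra.IsIntegral A (MvPolynomial ι K) := inferInstance
  have hAlg : Algebra.IsAlgebraic A (MvPolynomial ι K) := inferInstance
  have hbasis : IsTranscendenceBasis K f :=
    Algebra.IsAlgebraic.isTranscendenceBasis_of_le_trdeg_of_finite K f
      (by rw [MvPolynomial.trdeg_of_isDomain]; simp)
  have hic : IsIntegrallyClosed A :=
    IsIntegrallyClosed.of_equiv (hbasis.1.aevalEquiv.toRingEquiv)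
  -- Nakayama
  obtain ⟨e, he⟩ := exists_interp a ha
  let N : Submodule A (MvPolynomial ι K) := Submodule.span A (Set.range e)
  let m : Ideal A := Ideal.span (Set.range fun j => (⟨f j, Algebra.subset_adjoin ⟨j, rfl⟩⟩ : A))
  have hsup : (⊤ : Submodule A (MvPolynomial ι K)) ≤ N ⊔ m • ⊤ := by
    intro p _
    obtain ⟨w, hw⟩ := he p
    have h1 : p - ∑ σ, C (w σ) * e σ ∈ m.map (algebraMap A (MvPolynomial ι K)) :=
      mem_of_vanish a ha _ (fun j => Ideal.mem_map_of_mem (algebraMap A (MvPolynomial ι K))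
        (Ideal.subset_span ⟨j, rfl⟩ : (⟨f j, Algebra.subset_adjoin ⟨j, rfl⟩⟩ : A) ∈ m)) _ hw
    have h2 : p - ∑ σ, C (w σ) * e σ ∈ m • (⊤ : Submodule A (MvPolynomial ι K)) := by
      rw [Ideal.smul_top_eq_map]; exact h1
    have h3 : ∑ σ, C (w σ) * e σ ∈ N := by
      refine Submodule.sum_mem _ fun σ _ => ?_
      exact N.smul_mem (algebraMap K A (w σ)) (Submodule.subset_span ⟨σ, rfl⟩)
    have := Submodule.add_mem_sup h3 h2
    rwa [add_sub_cancel] at this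
  obtain ⟨s, hs1, hsN⟩ := Submodule.exists_sub_one_mem_and_smul_le_of_fg_of_le_sup
    hfin.1 le_rfl hsup
  have hs0 : s ≠ 0 := by
    rintro rfl
    let ev : A →+* K := (eval (fun i => a i i)).comp (algebraMap A (MvPolynomial ι K))
    have hm : m ≤ RingHom.ker ev := by
      refine Ideal.span_le.2 ?_
      rintro _ ⟨j, rfl⟩
      change eval (fun i => a i i) (f j) = 0
      simp only [f, map_prod]
      exact Finset.prod_eq_zero (Finset.mem_univ j) (by simp)
    have := hm hs1
    rw [RingHom.mem_ker] at this
    simp at this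
  -- dependence
  set n := (Fintype.card ι).factorial with hn
  have hdep : ¬ LinearIndependent A (fun k : Fin (n + 1) => (X i₀ : MvPolynomial ι K) ^ (k : ℕ)) := by
    intro hli
    have hli2 : LinearIndependent A
        (fun k : Fin (n + 1) => s • (X i₀ : MvPolynomial ι K) ^ (k : ℕ)) := by
      rw [Fintype.linearIndependent_iff] at hli ⊢
      intro g hg k
      have := hli (fun k => g k * s) (by simpa [mul_smul] using hg) k
      exact (mul_eq_zero.1 this).resolve_right hs0
    classical
    have := linearIndependent_le_span_aux' _ hli2 (Set.range e) (by
      rintro _ ⟨k, rfl⟩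
      exact hsN (Submodule.smul_mem_pointwise_smul _ s _ trivial))
    have h2 := Fintype.card_range_le e
    rw [Fintype.card_perm] at h2
    simp only [Fintype.card_fin] at this
    omega
  rw [Fintype.linearIndependent_iff] at hdep
  push Not at hdep
  obtain ⟨g, hg, k, hk⟩ := hdep
  let Q : Polynomial A := ∑ k : Fin (n + 1), Polynomial.monomial (k : ℕ) (g k)
  have hQ0 : Q ≠ 0 := by
    intro h
    apply hk
    have := congrArg (fun Q => Polynomial.coeff Q (k : ℕ)) h
    simpa [Q, Polynomial.finsetSum_coeff, Polynomial.coeff_monomial, Fin.val_inj] using this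
  have hQe : Polynomial.aeval (X i₀ : MvPolynomial ι K) Q = 0 := by
    rw [← hg]
    simp [Q, Polynomial.aeval_monomial, Algebra.smul_def]
  have hQd : Q.natDegree ≤ n := by
    refine Polynomial.natDegree_sum_le_of_forall_le _ _ fun k _ => ?_
    exact (Polynomial.natDegree_monomial_le _).trans (by omega)
  have hmd : (minpoly A (X i₀ : MvPolynomial ι K)).natDegree ≤ n :=
    (Polynomial.natDegree_le_natDegree
      (minpoly.IsIntegrallyClosed.degree_le_of_ne_zero hQ0 hQe)).trans hQd
  have hmm := minpoly.monic (hint i₀)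
  let ev : (ι → K) → (A →ₐ[K] K) := fun y => (aeval y).comp A.val
  refine ⟨(minpoly A (X i₀ : MvPolynomial ι K)).map (ev y₀).toRingHom, (hmm.map _).ne_zero,
    Polynomial.natDegree_map_le.trans hmd, fun y hy => ?_⟩
  have hevf : ∀ (y : ι → K) j, aeval y (f j) = ∏ i, (y i - a i j) := by
    intro y j
    simp [f]
  have hev : ev y₀ = ev y := by
    refine AlgHom.adjoin_ext ?_
    rintro _ ⟨j, rfl⟩
    change aeval y₀ (f j) = aeval y (f j)
    rw [hevf, hevf, hy, hy₀]
  rw [hev, Polynomial.eval_map]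
  have := congrArg (aeval y) (minpoly.aeval A (X i₀ : MvPolynomial ι K))
  rw [map_zero, Polynomial.aeval_def] at this
  have h2 := Polynomial.hom_eval₂ (minpoly A (X i₀ : MvPolynomial ι K))
    (algebraMap A (MvPolynomial ι K)) (aeval y : MvPolynomial ι K →ₐ[K] K).toRingHom (X i₀)
  have h3 : (aeval y : MvPolynomial ι K →ₐ[K] K).toRingHom (X i₀) = y i₀ := by simp
  rw [h3] at h2
  exact h2.symm.trans this

/-- Let `F` be a field with `q^r` elements and `N : F → F`, `N x = x^{1+q+⋯+q^{r−1}}`, the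
norm map of `F` over its subfield with `q` elements. If `d₁, …, d_r ∈ F` are pairwise
distinct and `c₁, …, c_r ∈ F`, then the system `N(x + dᵢ) = cᵢ`, `i = 1, …, r`, has at
most `r!` solutions `x ∈ F`. -/
theorem norm_system_solutions {q r : ℕ} (hq : IsPrimePow q) (hr : 1 ≤ r)
    {F : Type} [Field F] [Fintype F] (hF : Fintype.card F = q ^ r)
    (c d : Fin r → F) (hd : Function.Injective d) :
    {x : F | ∀ i : Fin r,
      (x + d i) ^ (∑ j ∈ Finset.range r, q ^ j) = c i}.ncard ≤ r.factorial := by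
  classical
  obtain ⟨p, k, hp, hk, rfl⟩ := hq
  have hp' : p.Prime := hp.nat_prime
  haveI : Fact p.Prime := ⟨hp'⟩
  haveI : CharP F p := by
    obtain ⟨p', hc⟩ := CharP.exists F
    haveI := hc
    obtain ⟨n, hp1, hcard⟩ := FiniteField.card F p'
    have h1 : p' ∣ (p ^ k) ^ r := by
      rw [← hF, hcard]; exact dvd_pow_self _ n.ne_zero
    have h2 := (Nat.prime_dvd_prime_iff_eq hp1 hp').1
      (hp1.dvd_of_dvd_pow (hp1.dvd_of_dvd_pow h1))
    exact h2 ▸ hc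
  haveI : ExpChar F p := .prime hp'
  let a : Fin r → Fin r → F := fun i j => -(d j) ^ ((p ^ k) ^ (i : ℕ))
  have ha : ∀ i, Function.Injective (a i) := by
    intro i j j' h
    apply hd
    have h1 : d j ^ (p ^ (k * i)) = d j' ^ (p ^ (k * i)) := by
      simpa [a, pow_mul] using h
    exact iterateFrobenius_inj F p (k * i) (by simpa [iterateFrobenius_def] using h1)
  obtain ⟨P, hP0, hPd, hP⟩ := exists_monic a ha ⟨0, hr⟩ c
  rw [Fintype.card_fin] at hPd
  have hsub : {x : F | ∀ i : Fin r, (x + d i) ^ (∑ j ∈ Finset.range r, (p ^ k) ^ j) = c i} ⊆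
      (P.roots.toFinset : Set F) := by
    intro x hx
    have := hP (fun i => x ^ ((p ^ k) ^ (i : ℕ))) fun j => by
      rw [← hx j, ← Finset.prod_pow_eq_pow_sum, ← Fin.prod_univ_eq_prod_range]
      refine Finset.prod_congr rfl fun i _ => ?_
      simp only [a, sub_neg_eq_add, ← pow_mul]
      rw [add_pow_expChar_pow]
    simp only [Finset.mem_coe, Multiset.mem_toFinset, Polynomial.mem_roots hP0]
    simpa using this
  calc _ ≤ (P.roots.toFinset : Set F).ncard := Set.ncard_le_ncard hsub (Finset.finite_toSet _)
    _ = P.roots.toFinset.card := Set.ncard_coe_finset _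
    _ ≤ P.roots.card := Multiset.toFinset_card_le _
    _ ≤ P.natDegree := P.card_roots'
    _ ≤ _ := hPd
end

section
/- For every prime power q there exists a simple graph on n = q³ − q² + q − 1 vertices that is K_{3,3}-free (contains no complete bipartite subgraph K_{3,3}) and has at least (q⁵ − q⁴ + q³ − 2q²)/2 edges. -/
namespace K33

/-- Homogeneous coordinates on the projective line. -/
def X {K : Type} [Field K] : Option K → K
  | some A => A
  | none => 1

def Y {K : Type} [Field K] : Option K → K
  | some _ => 1
  | none => 0

def det {K : Type} [Field K] (A B : Option K) : K := X A * Y B - X B * Y A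

variable {K : Type} [Field K]

lemma det_eq_zero {A B : Option K} (h : det A B = 0) : A = B := by
  cases A <;> cases B <;> simp_all [det, X, Y, sub_eq_zero]

lemma det_self (A : Option K) : det A A = 0 := by simp [det]

lemma det_swap (A B : Option K) : det A B = - det B A := by simp [det]

def N (σ : K →+* K) (x : K) : K := x * σ x

lemma N_neg (σ : K →+* K) (x : K) : N σ (-x) = N σ x := by simp [N]

lemma quad (σ : K →+* K) {α β γ d1 d2 d3 a1 a2 a3 b : K}
    (hrel : α * d1 + β * d2 + γ * d3 = 0)
    (h1 : N σ d1 * a1 * b = 1) (h2 : N σ d2 * a2 * b = 1) (h3 : N σ d3 * a3 * b = 1) :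
    (σ α * β) * (d2 / d1) ^ 2 +
      (α * σ α + β * σ β * (a1 / a2) - γ * σ γ * (a1 / a3)) * (d2 / d1)
      + α * σ β * (a1 / a2) = 0 := by
  have hd1 : d1 ≠ 0 := by rintro rfl; simp [N] at h1
  have hb : b ≠ 0 := by rintro rfl; simp at h1
  have ha2 : a2 ≠ 0 := by rintro rfl; simp at h2
  have ha3 : a3 ≠ 0 := by rintro rfl; simp at h3
  have hs1 : σ d1 ≠ 0 := by simpa using hd1
  have e2 : (d2 / d1) * (σ d2 / σ d1) = a1 / a2 := by
    unfold N at h1 h2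
    field_simp
    apply mul_right_cancel₀ hb
    linear_combination h2 - h1
  have e3 : (d3 / d1) * (σ d3 / σ d1) = a1 / a3 := by
    unfold N at h1 h3
    field_simp
    apply mul_right_cancel₀ hb
    linear_combination h3 - h1
  have r : γ * (d3 / d1) = -(α + β * (d2 / d1)) := by
    field_simp
    linear_combination hrel
  have r' : σ γ * (σ d3 / σ d1) = -(σ α + σ β * (σ d2 / σ d1)) := by
    have := congrArg σ r
    simpa using this
  generalize d2 / d1 = t at *
  generalize σ d2 / σ d1 = s at *
  generalize d3 / d1 = w at *
  generalize σ d3 / σ d1 = z at *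
  rw [← e2, ← e3]
  linear_combination (-t * σ γ * z) * r + (α + β * t) * t * r'

lemma two_roots {a b c t1 t2 t3 : K} (ha : a ≠ 0) (h1 : a * t1 ^ 2 + b * t1 + c = 0)
    (h2 : a * t2 ^ 2 + b * t2 + c = 0) (h3 : a * t3 ^ 2 + b * t3 + c = 0) :
    t1 = t2 ∨ t1 = t3 ∨ t2 = t3 := by
  by_contra! h
  obtain ⟨h12, h13, h23⟩ := h
  have e1 : a * (t1 + t2) + b = 0 := by
    apply mul_right_cancel₀ (sub_ne_zero.2 h12); linear_combination h1 - h2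
  have e2 : a * (t1 + t3) + b = 0 := by
    apply mul_right_cancel₀ (sub_ne_zero.2 h13); linear_combination h1 - h3
  apply h23
  apply mul_left_cancel₀ ha
  linear_combination e1 - e2

lemma same_t {A1 A2 B C : Option K} (h12 : A1 ≠ A2) (hB : det A1 B ≠ 0) (hC : det A1 C ≠ 0)
    (h : det A2 B / det A1 B = det A2 C / det A1 C) : B = C := by
  rw [div_eq_div_iff hB hC] at h
  have : det A1 A2 * det B C = 0 := by
    unfold det at *
    linear_combination -h
  rcases mul_eq_zero.1 this with h | h
  · exact absurd (det_eq_zero h) h12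
  · exact det_eq_zero h

def graph (σ : K →+* K) (H : Subgroup Kˣ) : SimpleGraph (Option K × H) where
  Adj u v := N σ (det u.1 v.1) * (u.2 : Kˣ) * (v.2 : Kˣ) = 1
  symm := ⟨fun u v h => by
    rw [det_swap, N_neg] 
    linear_combination h⟩
  loopless := ⟨fun u h => by simp [det_self, N] at h⟩

lemma fst_ne (σ : K →+* K) (H : Subgroup Kˣ) {u u' v : Option K × H} (h : u ≠ u')
    (h1 : (graph σ H).Adj u v) (h2 : (graph σ H).Adj u' v) : u.1 ≠ u'.1 := by
  intro e
  apply h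
  change _ = _ at h1 h2
  rw [← e] at h2
  refine Prod.ext e (Subtype.ext (Units.ext ?_))
  have hN : N σ (det u.1 v.1) ≠ 0 := by intro h; simp [h] at h1
  have hv : ((v.2 : Kˣ) : K) ≠ 0 := Units.ne_zero _
  apply mul_left_cancel₀ hN
  apply mul_right_cancel₀ hv
  rw [h1, h2]

lemma free (σ : K →+* K) (H : Subgroup Kˣ) :
    ¬ ∃ u v : Fin 3 → Option K × H, Function.Injective u ∧ Function.Injective v ∧
        (∀ i j, u i ≠ v j) ∧ (∀ i j, (graph σ H).Adj (u i) (v j)) := by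
  rintro ⟨u, v, hu, hv, -, h⟩
  have hU : ∀ i j, i ≠ j → (u i).1 ≠ (u j).1 := fun i j hij =>
    fst_ne σ H (hu.ne hij) (h i 0) (h j 0)
  have hV : ∀ i j, i ≠ j → (v i).1 ≠ (v j).1 := fun i j hij =>
    fst_ne σ H (hv.ne hij) (h 0 i).symm (h 0 j).symm
  have hd : ∀ i j, det (u i).1 (v j).1 ≠ 0 := fun i j e => by
    have := h i j
    change _ = _ at this
    simp [e, N] at this
  have rel : ∀ j, det (u 1).1 (u 2).1 * det (u 0).1 (v j).1
      + det (u 2).1 (u 0).1 * det (u 1).1 (v j).1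
      + det (u 0).1 (u 1).1 * det (u 2).1 (v j).1 = 0 := fun j => by unfold det; ring
  have Q := fun j => quad σ (rel j) (h 0 j) (h 1 j) (h 2 j)
  have hne : σ (det (u 1).1 (u 2).1) * det (u 2).1 (u 0).1 ≠ 0 := by
    refine mul_ne_zero ?_ fun e => hU 2 0 (by decide) (det_eq_zero e)
    simpa using fun e => hU 1 2 (by decide) (det_eq_zero e)
  have S := fun i j => same_t (hU 0 1 (by decide)) (hd 0 i) (hd 0 j)
  rcases two_roots hne (Q 0) (Q 1) (Q 2) with e | e | e
  · exact hV 0 1 (by decide) (S _ _ e)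
  · exact hV 0 2 (by decide) (S _ _ e)
  · exact hV 1 2 (by decide) (S _ _ e)

open Classical in
lemma edges [Fintype K] (σ : K →+* K) (H : Subgroup Kˣ)
    (hH : ∀ x : Kˣ, x * Units.map (σ : K →* K) x ∈ H) :
    Nat.card (Option K × H) * Fintype.card K ≤ 2 * (graph σ H).edgeSet.ncard := by
  rw [Nat.card_eq_fintype_card, ← SimpleGraph.coe_edgeFinset, Set.ncard_coe_finset,
    ← SimpleGraph.sum_degrees_eq_twice_card_edges, ← smul_eq_mul, ← Finset.card_univ]
  apply Finset.card_nsmul_le_sum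
  rintro ⟨A, a⟩ -
  have key : ∀ B : Option K, ∃ b : H, B ≠ A → (graph σ H).Adj (A, a) (B, b) := by
    intro B
    by_cases hB : B = A
    · exact ⟨1, fun h => absurd hB h⟩
    · have hd : det A B ≠ 0 := fun e => hB (det_eq_zero e).symm
      refine ⟨(⟨_, hH (Units.mk0 _ hd)⟩ * a)⁻¹, fun _ => ?_⟩
      change N σ (det A B) * _ * _ = 1
      have : σ (det A B) ≠ 0 := by simpa using hd
      have : ((a : Kˣ) : K) ≠ 0 := Units.ne_zero _
      simp [N]
      field_simp
  choose f hf using key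
  have : ((Finset.univ.erase A).image fun B => (B, f B)) ⊆ (graph σ H).neighborFinset (A, a) := by
    intro x hx
    simp only [Finset.mem_image, Finset.mem_erase] at hx
    obtain ⟨B, ⟨hB, -⟩, rfl⟩ := hx
    simpa using hf B hB
  have := Finset.card_le_card this
  rw [Finset.card_image_of_injective _ (fun x y h => (Prod.ext_iff.1 h).1)] at this
  simpa using this

end K33

/-- For every prime power `q` there is a simple graph on `n = q³ − q² + q − 1` vertices
that contains no `K_{3,3}` subgraph and has at least `(q⁵ − q⁴ + q³ − 2q²)/2` edges. -/
theorem exists_K33_free_graph {q : ℕ} (hq : IsPrimePow q) :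
    ∃ (V : Type) (_ : Fintype V) (G : SimpleGraph V),
      Fintype.card V = q ^ 3 - q ^ 2 + q - 1 ∧
      (¬ ∃ u v : Fin 3 → V, Function.Injective u ∧ Function.Injective v ∧
        (∀ i j, u i ≠ v j) ∧ (∀ i j, G.Adj (u i) (v j))) ∧
      (q : ℤ) ^ 5 - (q : ℤ) ^ 4 + (q : ℤ) ^ 3 - 2 * (q : ℤ) ^ 2 ≤
        2 * (G.edgeSet.ncard : ℤ) := by
  classical
  have hq1 := hq.one_lt
  obtain ⟨p, k, hp, hk, hpk⟩ := hq
  have hp' : Fact p.Prime := ⟨hp.nat_prime⟩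
  let K := GaloisField p (2 * k)
  let _ : Fintype K := Fintype.ofFinite K
  have hK : Fintype.card K = q ^ 2 := by
    rw [← Nat.card_eq_fintype_card, GaloisField.card p _ (by omega), ← hpk, ← pow_mul, mul_comm]
  let σ : K →+* K := iterateFrobenius K p k
  have hσ : ∀ x, σ x = x ^ q := fun x => by simp [σ, iterateFrobenius_def, hpk]
  let H : Subgroup Kˣ := (powMonoidHom (q - 1) : Kˣ →* Kˣ).ker
  have hU : Nat.card Kˣ = (q + 1) * (q - 1) := by
    rw [Nat.card_units, Nat.card_eq_fintype_card, hK]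
    simpa using Nat.sq_sub_sq q 1
  have hH : Fintype.card H = q - 1 := by
    rw [← Nat.card_eq_fintype_card, IsCyclic.card_powMonoidHom_ker, hU]
    simp
  have hmem : ∀ x : Kˣ, x * Units.map (σ : K →* K) x ∈ H := by
    intro x
    have : x * Units.map (σ : K →* K) x = x ^ (q + 1) := by
      ext; simp [hσ, pow_succ, mul_comm]
    rw [this, MonoidHom.mem_ker, powMonoidHom_apply, ← pow_mul, ← hU]
    exact pow_card_eq_one'
  have hcard : Fintype.card (Option K × H) = (q ^ 2 + 1) * (q - 1) := by
    rw [Fintype.card_prod, Fintype.card_option, hK, hH]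
  refine ⟨Option K × H, inferInstance, K33.graph σ H, ?_, K33.free σ H, ?_⟩
  · rw [hcard]
    obtain ⟨m, rfl⟩ : ∃ m, q = m + 1 := ⟨q - 1, by omega⟩
    have : (m + 1) ^ 3 = (m + 1) ^ 2 + m * (m + 1) ^ 2 := by ring
    rw [this, Nat.add_sub_cancel_left, ← Nat.add_assoc, Nat.add_sub_cancel, Nat.add_sub_cancel]
    ring
  · have := K33.edges σ H hmem
    rw [Nat.card_eq_fintype_card, hcard, hK] at this
    obtain ⟨m, rfl⟩ : ∃ m, q = m + 1 := ⟨q - 1, by omega⟩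
    rw [Nat.add_sub_cancel] at this
    zify at this
    push_cast
    nlinarith [sq_nonneg ((m : ℤ) + 1)]
end
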